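/- arXiv:2512.16116 — 10 statements merged into one kernel-verified Lean document; each statement's English description precedes it below -/
import Mathlib

section
/- Let Φ : G → Aut(H) be a semi-trivial action of a brace (G,·_G,∘_G) on a brace (H,·_H,∘_H). Then the set H × G equipped with the operations (h,a) ·⋊ (k,b) = (h ·_H k, a ·_G b) and (h,a) ∘⋊ (k,b) = (h ∘_H Φ(a)(k), a ∘_G b) is a brace (the semi-direct product H ⋊_Φ G). -/
/-!
The dot-group is a direct product and the circle-group is the usual semi-direct product of
`(H, ∘)` by `(G, ∘)`, with inverse `(h, a) ↦ (Φ (cinvG a) (cinvH h), cinvG a)`.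
Since `Φ a` is a homomorphism for the dot operation of `H`, brace compatibility reduces
componentwise to that of `H`, applied to `h, Φ a k, Φ a l`, and that of `G`.
-/

structure IsGroup {G : Type*} (op : G → G → G) (e : G) (inv : G → G) : Prop where
  assoc : ∀ a b c, op (op a b) c = op a (op b c)
  one_op : ∀ a, op e a = a
  op_one : ∀ a, op a e = a
  inv_op : ∀ a, op (inv a) a = e
  op_inv : ∀ a, op a (inv a) = e

/-- A brace: an abelian group `(G, mul)` and a group `(G, circ)` with the compatibility
`a ∘ (b · c) = (a ∘ b) · a⁻¹ · (a ∘ c)`. -/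
structure IsBrace {G : Type*} (mul : G → G → G) (e : G) (inv : G → G)
    (circ : G → G → G) (ce : G) (cinv : G → G) : Prop where
  mul_group : IsGroup mul e inv
  mul_comm : ∀ a b, mul a b = mul b a
  circ_group : IsGroup circ ce cinv
  compat : ∀ a b c, circ a (mul b c) = mul (mul (circ a b) (inv a)) (circ a c)

/-- A homomorphism of braces preserves both operations. -/
def IsBraceHom {G H : Type*} (mulG circG : G → G → G) (mulH circH : H → H → H)
    (f : G → H) : Prop :=
  (∀ a b, f (mulG a b) = mulH (f a) (f b)) ∧ (∀ a b, f (circG a b) = circH (f a) (f b))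

/-- A brace automorphism: a bijective self-homomorphism. -/
def IsBraceAut {H : Type*} (mulH circH : H → H → H) (f : H → H) : Prop :=
  Function.Bijective f ∧ IsBraceHom mulH circH mulH circH f

/-- A semi-trivial action of the brace `G` on the brace `H`: each `Φ a` is a brace
automorphism of `H` and `Φ (a ∘ b) = Φ a ∘ Φ b`. -/
def IsSemiTrivialAction {G H : Type*} (circG : G → G → G)
    (mulH circH : H → H → H) (Φ : G → H → H) : Prop :=
  (∀ a, IsBraceAut mulH circH (Φ a)) ∧ (∀ a b h, Φ (circG a b) h = Φ a (Φ b h))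

/-- A relative Rota-Baxter operator on the brace `G` with respect to the semi-trivial
action `Φ` of `G` on `H`. -/
def IsRelRBO {G H : Type*} (mulG circG : G → G → G) (mulH circH : H → H → H)
    (Φ : G → H → H) (B : H → G) : Prop :=
  (∀ h k, mulG (B h) (B k) = B (mulH h k)) ∧
  (∀ h k, circG (B h) (B k) = B (circH h (Φ (B h) k)))

/-- An enhanced relative Rota-Baxter operator. -/
def IsEnhancedRelRBO {G H : Type*} (mulG circG : G → G → G) (mulH circH : H → H → H)
    (Φ : G → H → H) (B : H → G) : Prop :=
  (∀ h k, mulG (B h) (B k) = B (mulH h k)) ∧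
  (∀ (a : G) (h k : H), circG (mulG (B h) a) (B k)
      = mulG (B (circH h (Φ (mulG (B h) a) k))) a)

/-- A post-group: a group `(G, circ)` with an operation `tri` such that each left
multiplication `tri a` is an automorphism of `(G, circ)` and the weighted associativity
`(a ∘ (a ⊳ b)) ⊳ c = a ⊳ (b ⊳ c)` holds. -/
structure IsPostGroup {G : Type*} (circ : G → G → G) (ce : G) (cinv : G → G)
    (tri : G → G → G) : Prop where
  circ_group : IsGroup circ ce cinv
  tri_bij : ∀ a, Function.Bijective (tri a)
  tri_circ : ∀ a b c, tri a (circ b c) = circ (tri a b) (tri a c)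
  weighted : ∀ a b c, tri (circ a (tri a b)) c = tri a (tri b c)

/-- A post-brace: a brace `(G, mul, circ)` with `tri` making `(G, circ, tri)` a post-group
and `a ⊳ (b · c) = (a ⊳ b) · (a ⊳ c)`. -/
structure IsPostBrace {G : Type*} (mul : G → G → G) (e : G) (inv : G → G)
    (circ : G → G → G) (ce : G) (cinv : G → G) (tri : G → G → G) : Prop where
  brace : IsBrace mul e inv circ ce cinv
  post : IsPostGroup circ ce cinv tri
  tri_mul : ∀ a b c, tri a (mul b c) = mul (tri a b) (tri a c)

/-- A two-sided brace. -/
def IsTwoSidedBrace {G : Type*} (mul : G → G → G) (e : G) (inv : G → G)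
    (circ : G → G → G) (ce : G) (cinv : G → G) : Prop :=
  IsBrace mul e inv circ ce cinv ∧
  ∀ a b c, circ (mul a b) c = mul (mul (circ a c) (inv c)) (circ b c)

/-- The adjoint action of the `circ`-group: `Ad∘_a(b) = a ∘ b ∘ ā`. -/
def adC {G : Type*} (circ : G → G → G) (cinv : G → G) (a b : G) : G :=
  circ (circ a b) (cinv a)

/-- A Rota-Baxter operator on a two-sided brace (w.r.t. the adjoint semi-trivial action). -/
def IsRBTwoSided {G : Type*} (mul circ : G → G → G) (cinv : G → G) (B : G → G) : Prop :=
  (∀ a b, mul (B a) (B b) = B (mul a b)) ∧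
  (∀ a b, circ (B a) (B b) = B (circ a (adC circ cinv (B a) b)))

/-- An enhanced Rota-Baxter operator on a two-sided brace. -/
def IsEnhancedRBTwoSided {G : Type*} (mul circ : G → G → G) (cinv : G → G)
    (B : G → G) : Prop :=
  IsRBTwoSided mul circ cinv B ∧
  ∀ a b x, circ (mul (B a) x) (B b)
      = mul (B (circ a (adC circ cinv (mul (B a) x) b))) x

/-- `R × Id` on `X × X × X`. -/
def YB12 {X : Type*} (R : X × X → X × X) : X × X × X → X × X × X :=
  fun p => ((R (p.1, p.2.1)).1, (R (p.1, p.2.1)).2, p.2.2)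

/-- `Id × R` on `X × X × X`. -/
def YB23 {X : Type*} (R : X × X → X × X) : X × X × X → X × X × X :=
  fun p => (p.1, R p.2)

/-- A set-theoretical solution of the Yang-Baxter equation. -/
def IsYBSolution {X : Type*} (R : X × X → X × X) : Prop :=
  Function.Bijective R ∧
  YB12 R ∘ YB23 R ∘ YB12 R = YB23 R ∘ YB12 R ∘ YB23 R

/-- Non-degeneracy of a solution `R (a, b) = (φ_a b, ψ_b a)`. -/
def IsNonDegenerate {X : Type*} (R : X × X → X × X) : Prop :=
  (∀ a, Function.Bijective fun b => (R (a, b)).1) ∧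
  (∀ b, Function.Bijective fun a => (R (a, b)).2)

/-- Involutivity of a solution: `R ∘ R = Id`. -/
def IsInvolutiveSol {X : Type*} (R : X × X → X × X) : Prop :=
  ∀ p, R (R p) = p

/-- A matched pair of groups `(G, H, σ)` with `σ (a, h) = (r a h, l a h)`. -/
def IsMatchedPairOfGroups {G H : Type*} (opG : G → G → G) (eG : G)
    (opH : H → H → H) (eH : H) (r : G → H → H) (l : G → H → G) : Prop :=
  (∀ h, r eG h = h) ∧
  (∀ a b h, r a (r b h) = r (opG a b) h) ∧
  (∀ a b h, l (opG a b) h = opG (l a (r b h)) (l b h)) ∧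
  (∀ a, l a eH = a) ∧
  (∀ a h k, l (l a h) k = l a (opH h k)) ∧
  (∀ a h k, r a (opH h k) = opH (r a h) (r (l a h) k))

/-- A left ideal of the brace with multiplication `op` (with unit `u`) and second
operation `cop`: a subgroup of the `op`-group such that `p⁻¹ op (p cop x) ∈ S`
(expressed via the unique solution `r` of `op p r = cop p x`). -/
def IsLeftIdealOf {P : Type*} (op : P → P → P) (u : P) (cop : P → P → P)
    (S : Set P) : Prop :=
  u ∈ S ∧ (∀ p ∈ S, ∀ q ∈ S, op p q ∈ S) ∧
  (∀ p ∈ S, ∃ q ∈ S, op p q = u ∧ op q p = u) ∧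
  (∀ p : P, ∀ x ∈ S, ∀ r, op p r = cop p x → r ∈ S)

/-- `I` is an ideal of the sub-brace `S` of the ambient brace: a subgroup of `(S, mul)`,
normal in `(S, mul)` and in `(S, circ)`, and a left ideal of `S`. -/
def IsIdealOfSub {G : Type*} (mul : G → G → G) (e : G) (inv : G → G)
    (circ : G → G → G) (cinv : G → G) (S I : Set G) : Prop :=
  I ⊆ S ∧ e ∈ I ∧
  (∀ x ∈ I, ∀ y ∈ I, mul x y ∈ I) ∧ (∀ x ∈ I, inv x ∈ I) ∧
  (∀ s ∈ S, ∀ x ∈ I, mul (mul s x) (inv s) ∈ I) ∧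
  (∀ s ∈ S, ∀ x ∈ I, circ (circ s x) (cinv s) ∈ I) ∧
  (∀ s ∈ S, ∀ x ∈ I, mul (inv s) (circ s x) ∈ I)

/-- The semi-direct product `H ⋊_Φ G` of braces along a semi-trivial
action is a brace. -/
theorem statement1 {G H : Type*}
    (mulG : G → G → G) (eG : G) (invG : G → G)
    (circG : G → G → G) (ceG : G) (cinvG : G → G)
    (mulH : H → H → H) (eH : H) (invH : H → H)
    (circH : H → H → H) (ceH : H) (cinvH : H → H)
    (hG : IsBrace mulG eG invG circG ceG cinvG)
    (hH : IsBrace mulH eH invH circH ceH cinvH)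
    (Φ : G → H → H) (hΦ : IsSemiTrivialAction circG mulH circH Φ) :
    ∃ cinvP : H × G → H × G,
      IsBrace (fun p q => (mulH p.1 q.1, mulG p.2 q.2)) (eH, eG)
        (fun p => (invH p.1, invG p.2))
        (fun p q => (circH p.1 (Φ p.2 q.1), circG p.2 q.2)) (ceH, ceG) cinvP := by
  obtain ⟨hAut, hAct⟩ := hΦ
  have hMul : ∀ a h k, Φ a (mulH h k) = mulH (Φ a h) (Φ a k) := fun a => (hAut a).2.1
  have hCirc : ∀ a h k, Φ a (circH h k) = circH (Φ a h) (Φ a k) := fun a => (hAut a).2.2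
  -- `Φ ceG` is an injective idempotent map.
  have hId : ∀ h, Φ ceG h = h := fun h =>
    (hAut ceG).1.1 (by rw [← hAct, hG.circ_group.one_op])
  -- `Φ a ceH` is an idempotent of the group `(H, ∘)`.
  have hOne : ∀ a, Φ a ceH = ceH := by
    intro a
    have h : circH (Φ a ceH) (Φ a ceH) = Φ a ceH := by
      rw [← hCirc, hH.circ_group.one_op]
    calc Φ a ceH
        = circH (circH (cinvH (Φ a ceH)) (Φ a ceH)) (Φ a ceH) := by
          rw [hH.circ_group.inv_op, hH.circ_group.one_op]
      _ = ceH := by rw [hH.circ_group.assoc, h, hH.circ_group.inv_op]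
  refine ⟨fun p => (Φ (cinvG p.2) (cinvH p.1), cinvG p.2),
    ⟨?_, ?_, ?_, ?_, ?_⟩, ?_, ⟨?_, ?_, ?_, ?_, ?_⟩, ?_⟩
  · rintro ⟨h, a⟩ ⟨k, b⟩ ⟨l, c⟩
    exact Prod.ext (hH.mul_group.assoc _ _ _) (hG.mul_group.assoc _ _ _)
  · rintro ⟨h, a⟩
    exact Prod.ext (hH.mul_group.one_op _) (hG.mul_group.one_op _)
  · rintro ⟨h, a⟩
    exact Prod.ext (hH.mul_group.op_one _) (hG.mul_group.op_one _)
  · rintro ⟨h, a⟩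
    exact Prod.ext (hH.mul_group.inv_op _) (hG.mul_group.inv_op _)
  · rintro ⟨h, a⟩
    exact Prod.ext (hH.mul_group.op_inv _) (hG.mul_group.op_inv _)
  · rintro ⟨h, a⟩ ⟨k, b⟩
    exact Prod.ext (hH.mul_comm _ _) (hG.mul_comm _ _)
  · rintro ⟨h, a⟩ ⟨k, b⟩ ⟨l, c⟩
    refine Prod.ext ?_ (hG.circ_group.assoc _ _ _)
    simp only [hAct, hCirc, hH.circ_group.assoc]
  · rintro ⟨h, a⟩
    refine Prod.ext ?_ (hG.circ_group.one_op _)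
    simp only [hId, hH.circ_group.one_op]
  · rintro ⟨h, a⟩
    refine Prod.ext ?_ (hG.circ_group.op_one _)
    simp only [hOne, hH.circ_group.op_one]
  · rintro ⟨h, a⟩
    refine Prod.ext ?_ (hG.circ_group.inv_op _)
    simp only [← hCirc, hH.circ_group.inv_op, hOne]
  · rintro ⟨h, a⟩
    refine Prod.ext ?_ (hG.circ_group.op_inv _)
    simp only [← hAct, hG.circ_group.op_inv, hId, hH.circ_group.op_inv]
  · rintro ⟨h, a⟩ ⟨k, b⟩ ⟨l, c⟩
    refine Prod.ext ?_ (hG.compat _ _ _)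
    simp only [hMul, hH.compat]
end

section
/- Let Φ : G → Aut(H) be a semi-trivial action of a brace (G,·_G,∘_G) on a brace (H,·_H,∘_H), and let B : H → G be a map. Then B is a relative Rota-Baxter operator on G with respect to Φ if and only if its graph Gr(B) = {(h, B(h)) | h ∈ H} is a sub-brace of the semi-direct product brace H ⋊_Φ G (i.e. a subset closed under both multiplications and under both inversions, containing the unit). -/
theorem IsGroup.eq_one_of_op_self {G : Type*} {op : G → G → G} {e : G} {inv : G → G}
    (hg : IsGroup op e inv) {a : G} (h : op a a = a) : a = e := by
  rw [← hg.inv_op a]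
  nth_rewrite 3 [← h]
  rw [← hg.assoc, hg.inv_op, hg.one_op]

theorem IsGroup.eq_inv_of_op_eq_one {G : Type*} {op : G → G → G} {e : G} {inv : G → G}
    (hg : IsGroup op e inv) {a b : G} (h : op a b = e) : b = inv a := by
  rw [← hg.op_one (inv a), ← h, ← hg.assoc, hg.inv_op, hg.one_op]

/-- `B : H → G` is a relative Rota-Baxter operator iff its graph is a
sub-brace of the semi-direct product `H ⋊_Φ G` (closed under both multiplications and
both inversions, and containing the units). -/
theorem statement2 {G H : Type*}
    (mulG : G → G → G) (eG : G) (invG : G → G)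
    (circG : G → G → G) (ceG : G) (cinvG : G → G)
    (mulH : H → H → H) (eH : H) (invH : H → H)
    (circH : H → H → H) (ceH : H) (cinvH : H → H)
    (hG : IsBrace mulG eG invG circG ceG cinvG)
    (hH : IsBrace mulH eH invH circH ceH cinvH)
    (Φ : G → H → H) (hΦ : IsSemiTrivialAction circG mulH circH Φ)
    (B : H → G)
    (Gr : Set (H × G)) (hGr : Gr = {p : H × G | p.2 = B p.1}) :
    IsRelRBO mulG circG mulH circH Φ B ↔
      ((eH, eG) ∈ Gr ∧ (ceH, ceG) ∈ Gr ∧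
        (∀ p ∈ Gr, ∀ q ∈ Gr, (mulH p.1 q.1, mulG p.2 q.2) ∈ Gr) ∧
        (∀ p ∈ Gr, ∀ q ∈ Gr, (circH p.1 (Φ p.2 q.1), circG p.2 q.2) ∈ Gr) ∧
        (∀ p ∈ Gr, (invH p.1, invG p.2) ∈ Gr) ∧
        (∀ p ∈ Gr, ∃ q ∈ Gr,
          (circH p.1 (Φ p.2 q.1), circG p.2 q.2) = (ceH, ceG) ∧
          (circH q.1 (Φ q.2 p.1), circG q.2 p.2) = (ceH, ceG))) := by
  subst hGr
  constructor
  · rintro ⟨hm, hc⟩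
    obtain ⟨hAut, hact⟩ := hΦ
    have hBe : B eH = eG := hG.mul_group.eq_one_of_op_self (by
      rw [hm, hH.mul_group.one_op])
    have hΦce : ∀ a, Φ a ceH = ceH := fun a => hH.circ_group.eq_one_of_op_self (by
      rw [← (hAut a).2.2, hH.circ_group.one_op])
    have hBce : B ceH = ceG := hG.circ_group.eq_one_of_op_self (by
      rw [hc, hΦce, hH.circ_group.one_op])
    have hΦone : ∀ h, Φ ceG h = h := fun h => (hAut ceG).1.1 (by
      rw [← hact, hG.circ_group.one_op])
    refine ⟨hBe.symm, hBce.symm, ?_, ?_, ?_, ?_⟩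
    · rintro ⟨h, a⟩ (rfl : a = B h) ⟨k, b⟩ (rfl : b = B k)
      exact hm h k
    · rintro ⟨h, a⟩ (rfl : a = B h) ⟨k, b⟩ (rfl : b = B k)
      exact hc h k
    · rintro ⟨h, a⟩ (rfl : a = B h)
      exact (hG.mul_group.eq_inv_of_op_eq_one (by
        rw [hm, hH.mul_group.op_inv, hBe])).symm
    · rintro ⟨h, a⟩ (rfl : a = B h)
      obtain ⟨k, hk⟩ := (hAut (B h)).1.2 (cinvH h)
      have hBk : circG (B h) (B k) = ceG := by
        rw [hc, hk, hH.circ_group.op_inv, hBce]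
      refine ⟨(k, B k), rfl, Prod.ext ?_ hBk, Prod.ext ?_ ?_⟩
      · change circH h (Φ (B h) k) = ceH
        rw [hk, hH.circ_group.op_inv]
      · change circH k (Φ (B k) h) = ceH
        -- Both sides agree after applying the injective map `Φ (B h)`.
        apply (hAut (B h)).1.1
        rw [(hAut (B h)).2.2, ← hact, hBk, hΦone, hk, hH.circ_group.inv_op, hΦce]
      · change circG (B k) (B h) = ceG
        rw [hG.circ_group.eq_inv_of_op_eq_one hBk, hG.circ_group.inv_op]
  · rintro ⟨-, -, hm, hc, -, -⟩
    exact ⟨fun h k => hm (h, B h) rfl (k, B k) rfl, fun h k => hc (h, B h) rfl (k, B k) rfl⟩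
end

section
/- Let B : H → G be a relative Rota-Baxter operator on a brace (G,·_G,∘_G) with respect to a semi-trivial action Φ : G → Aut(H). Define h ∘_B k := h ∘_H Φ(B(h))(k). Then (H, ·_H, ∘_B) is a brace (the descendent brace), and B : (H, ·_H, ∘_B) → (G, ·_G, ∘_G) is a homomorphism of braces. -/
/-- A relative Rota-Baxter operator `B` induces the descendent brace
`(H, ·_H, ∘_B)` with `h ∘_B k = h ∘_H Φ(B h)(k)`, and `B` is a brace homomorphism from
the descendent brace to `G`. -/
theorem statement3 {G H : Type*}
    (mulG : G → G → G) (eG : G) (invG : G → G)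
    (circG : G → G → G) (ceG : G) (cinvG : G → G)
    (mulH : H → H → H) (eH : H) (invH : H → H)
    (circH : H → H → H) (ceH : H) (cinvH : H → H)
    (hG : IsBrace mulG eG invG circG ceG cinvG)
    (hH : IsBrace mulH eH invH circH ceH cinvH)
    (Φ : G → H → H) (hΦ : IsSemiTrivialAction circG mulH circH Φ)
    (B : H → G) (hB : IsRelRBO mulG circG mulH circH Φ B) :
    (∃ (u : H) (cinvB : H → H),
      IsBrace mulH eH invH (fun h k => circH h (Φ (B h) k)) u cinvB) ∧
    IsBraceHom mulH (fun h k => circH h (Φ (B h) k)) mulG circG B := by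
  obtain ⟨hAut, hΦc⟩ := hΦ
  obtain ⟨hBm, hBc⟩ := hB
  have HC := hH.circ_group
  have GC := hG.circ_group
  -- Idempotents of the two circle groups are trivial.
  have idemH : ∀ x, circH x x = x → x = ceH := fun x hx => by
    rw [← HC.inv_op x]; nth_rw 3 [← hx]; rw [← HC.assoc, HC.inv_op, HC.one_op]
  have idemG : ∀ x, circG x x = x → x = ceG := fun x hx => by
    rw [← GC.inv_op x]; nth_rw 3 [← hx]; rw [← GC.assoc, GC.inv_op, GC.one_op]
  have Φone : ∀ a, Φ a ceH = ceH := fun a => idemH _ (by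
    rw [← (hAut a).2.2, HC.one_op])
  have Bone : B ceH = ceG := idemG _ (by rw [hBc, Φone, HC.one_op])
  have Φid : ∀ h, Φ ceG h = h := fun h => (hAut ceG).1.1 (by
    rw [← hΦc, GC.one_op])
  have assocB : ∀ a b c, circH (circH a (Φ (B a) b)) (Φ (B (circH a (Φ (B a) b))) c)
      = circH a (Φ (B a) (circH b (Φ (B b) c))) := fun a b c => by
    rw [← hBc, hΦc, (hAut (B a)).2.2, HC.assoc]
  have oneB : ∀ a, circH ceH (Φ (B ceH) a) = a := fun a => by
    rw [Bone, Φid, HC.one_op]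
  have Bone' : ∀ a, circH a (Φ (B a) ceH) = a := fun a => by
    rw [Φone, HC.op_one]
  -- The circle inverse of `h` in the descendent brace is `Φ (B h)⁻¹ (cinvH h)`.
  choose inv hinv using fun h => (hAut (B h)).1.2 (cinvH h)
  have rinv : ∀ a, circH a (Φ (B a) (inv a)) = ceH := fun a => by
    rw [hinv, HC.op_inv]
  -- Right inverses in a monoid are two-sided, as `inv (inv a) = a`.
  have invinv : ∀ a, inv (inv a) = a := fun a => by
    have h := assocB a (inv a) (inv (inv a))
    rwa [rinv, rinv, oneB, Bone'] at h
  have linv : ∀ a, circH (inv a) (Φ (B (inv a)) a) = ceH := fun a => by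
    have h := rinv (inv a)
    rwa [invinv] at h
  exact ⟨⟨ceH, inv, hH.mul_group, hH.mul_comm, ⟨assocB, oneB, Bone', linv, rinv⟩,
    fun a b c => by simp only [(hAut (B a)).2.1, hH.compat]⟩,
    fun a b => (hBm a b).symm, fun a b => (hBc a b).symm⟩
end

section
/- Let (G,·,∘,⊳) be a post-brace. Define a ∗ b := a ∘ (a ⊳ b). Then (G,·,∗) is a brace whose unit is the common unit e of (G,·) and (G,∘); it is called the sub-adjacent brace of the post-brace. -/
/-- The sub-adjacent structure `a ∗ b = a ∘ (a ⊳ b)` of a post-brace is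
a brace whose unit is the common unit `e` of `(G, ·)` and `(G, ∘)`. -/
theorem statement4 {G : Type*} (mul : G → G → G) (e : G) (inv : G → G)
    (circ : G → G → G) (ce : G) (cinv : G → G) (tri : G → G → G)
    (hPB : IsPostBrace mul e inv circ ce cinv tri) :
    ce = e ∧
    ∃ sinv : G → G, IsBrace mul e inv (fun a b => circ a (tri a b)) e sinv := by
  obtain ⟨⟨hm, hcomm, hc, compat⟩, ⟨-, bij, tc, tw⟩, tm⟩ := hPB
  have hce : ce = e := by
    -- compatibility at `(ce, e, e)` reads `e = inv ce`
    have h := compat ce e e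
    simp only [hc.one_op, hm.one_op, hm.op_one] at h
    have h2 := hm.op_inv ce
    rwa [← h, hm.op_one] at h2
  subst hce
  have tri_e : ∀ a, tri a ce = ce := by
    intro a
    have h := tc a ce ce
    rw [hc.one_op] at h
    -- `tri a ce` is idempotent; cancel it on the left
    have h2 := congrArg (circ (cinv (tri a ce))) h
    rwa [← hc.assoc, hc.inv_op, hc.one_op, eq_comm] at h2
  have e_tri : ∀ c, tri ce c = c := by
    intro c
    have h := tw ce ce c
    rw [tri_e, hc.one_op] at h
    exact ((bij ce).1 h).symm
  choose sinv hs using fun a => (bij a).2 (cinv a)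
  have assoc : ∀ a b c, circ (circ a (tri a b)) (tri (circ a (tri a b)) c)
      = circ a (tri a (circ b (tri b c))) := by
    intro a b c
    rw [tw, tc, hc.assoc]
  have right_inv : ∀ a, circ a (tri a (sinv a)) = ce := by
    intro a
    rw [hs, hc.op_inv]
  refine ⟨rfl, sinv, hm, hcomm, ⟨assoc, ?_, ?_, ?_, right_inv⟩, ?_⟩
  · intro a
    simp only [e_tri, hc.one_op]
  · intro a
    simp only [tri_e, hc.op_one]
  · intro a
    -- `a = a ∗ (sinv a ∗ sinv (sinv a)) = sinv (sinv a)`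
    have h := assoc a (sinv a) (sinv (sinv a))
    rw [right_inv, right_inv, e_tri, hc.one_op, tri_e, hc.op_one] at h
    have h2 := right_inv (sinv a)
    rwa [h] at h2
  · intro a b c
    simp only [tm, compat]
end

section
/- Let B : H → G be a relative Rota-Baxter operator on a brace (G,·_G,∘_G) with respect to a semi-trivial action Φ : G → Aut(H). Define h ⊳_B k := Φ(B(h))(k). Then (H, ·_H, ∘_H, ⊳_B) is a post-brace, and its sub-adjacent brace (H, ·_H, ∗) with h ∗ k = h ∘_H (h ⊳_B k) coincides with the descendent brace (H, ·_H, ∘_B) where h ∘_B k = h ∘_H Φ(B(h))(k). -/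
/-- A relative Rota-Baxter operator `B` induces a post-brace
`(H, ·_H, ∘_H, ⊳_B)` with `h ⊳_B k = Φ(B h)(k)`, whose sub-adjacent brace operation
`h ∗ k = h ∘_H (h ⊳_B k)` coincides with the descendent operation
`h ∘_B k = h ∘_H Φ(B h)(k)`. -/
theorem statement7 {G H : Type*}
    (mulG : G → G → G) (eG : G) (invG : G → G)
    (circG : G → G → G) (ceG : G) (cinvG : G → G)
    (mulH : H → H → H) (eH : H) (invH : H → H)
    (circH : H → H → H) (ceH : H) (cinvH : H → H)
    (hG : IsBrace mulG eG invG circG ceG cinvG)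
    (hH : IsBrace mulH eH invH circH ceH cinvH)
    (Φ : G → H → H) (hΦ : IsSemiTrivialAction circG mulH circH Φ)
    (B : H → G) (hB : IsRelRBO mulG circG mulH circH Φ B) :
    IsPostBrace mulH eH invH circH ceH cinvH (fun h k => Φ (B h) k) ∧
    (∀ h k, circH h ((fun h k => Φ (B h) k) h k) = circH h (Φ (B h) k)) := by
  obtain ⟨hAut, hAct⟩ := hΦ
  -- Weighted associativity is the Rota-Baxter identity read through the action:
  -- `Φ (B (h ∘ Φ (B h) k)) = Φ (B h ∘ B k) = Φ (B h) ∘ Φ (B k)`.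
  refine ⟨⟨hH, ⟨hH.circ_group, fun a => (hAut (B a)).1, fun a => (hAut (B a)).2.2, ?_⟩,
    fun a => (hAut (B a)).2.1⟩, fun _ _ => rfl⟩
  intro a b c
  change Φ (B (circH a (Φ (B a) b))) c = Φ (B a) (Φ (B b) c)
  rw [← hB.2, hAct]
end

section
/- Let (G,·,∘) be a brace. Then the map R_G : G × G → G × G defined by R_G(a,b) = (a⁻¹ · (a ∘ b), (a⁻¹ · (a ∘ b))‾ ∘ a ∘ b), where x⁻¹ denotes the inverse of x in (G,·) and x̄ denotes the inverse of x in (G,∘), is a non-degenerate involutive set-theoretical solution of the Yang-Baxter equation on the set G. -/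
namespace IsGroup

variable {G : Type*} {op : G → G → G} {e : G} {inv : G → G}

lemma inv_op_cancel (h : IsGroup op e inv) (a b : G) : op (inv a) (op a b) = b := by
  rw [← h.assoc, h.inv_op, h.one_op]

lemma op_inv_cancel (h : IsGroup op e inv) (a b : G) : op a (op (inv a) b) = b := by
  rw [← h.assoc, h.op_inv, h.one_op]

lemma left_cancel (h : IsGroup op e inv) {a b c : G} (hbc : op a b = op a c) : b = c := by
  rw [← h.inv_op_cancel a b, hbc, h.inv_op_cancel]

lemma right_cancel (h : IsGroup op e inv) {a b c : G} (hbc : op b a = op c a) : b = c := by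
  rw [← h.op_one b, ← h.op_inv a, ← h.assoc, hbc, h.assoc, h.op_inv, h.op_one]

end IsGroup

/-- The map `λ a b = a⁻¹ · (a ∘ b)` of a brace. -/
def braceLam {G : Type*} (mul : G → G → G) (inv : G → G) (circ : G → G → G) (a b : G) : G :=
  mul (inv a) (circ a b)

/-- The map `ρ a b = (λ a b)‾ ∘ a ∘ b` of a brace; the arguments are in the order of `λ`, so
`ρ · b` is the map usually written `ρ_b`. -/
def braceRho {G : Type*} (mul : G → G → G) (inv : G → G) (circ : G → G → G) (cinv : G → G)
    (a b : G) : G :=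
  circ (circ (cinv (braceLam mul inv circ a b)) a) b

namespace IsBrace

variable {G : Type*} {mul : G → G → G} {e : G} {inv : G → G}
  {circ : G → G → G} {ce : G} {cinv : G → G}

local notation "lam" => braceLam mul inv circ
local notation "rho" => braceRho mul inv circ cinv

lemma mul_lam (h : IsBrace mul e inv circ ce cinv) (a b : G) : mul a (lam a b) = circ a b :=
  h.mul_group.op_inv_cancel _ _

lemma lam_circ_rho (h : IsBrace mul e inv circ ce cinv) (a b : G) :
    circ (lam a b) (rho a b) = circ a b := by
  rw [braceRho, h.circ_group.assoc, h.circ_group.op_inv_cancel]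

lemma lam_mul (h : IsBrace mul e inv circ ce cinv) (a b c : G) :
    lam a (mul b c) = mul (lam a b) (lam a c) := by
  simp only [braceLam, h.compat, h.mul_group.assoc]

lemma lam_one (h : IsBrace mul e inv circ ce cinv) (a : G) : lam a e = e := by
  apply h.mul_group.left_cancel (a := lam a e)
  rw [← h.lam_mul, h.mul_group.op_one, h.mul_group.op_one]

lemma circ_one (h : IsBrace mul e inv circ ce cinv) (a : G) : circ a e = a := by
  rw [← h.mul_lam, h.lam_one, h.mul_group.op_one]

/-- The two groups of a brace have the same unit. -/
lemma one_eq (h : IsBrace mul e inv circ ce cinv) : ce = e := by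
  rw [← h.circ_one ce, h.circ_group.one_op]

lemma lam_circ_one (h : IsBrace mul e inv circ ce cinv) (b : G) : lam ce b = b := by
  apply h.mul_group.left_cancel (a := ce)
  rw [h.mul_lam, h.circ_group.one_op, h.one_eq, h.mul_group.one_op]

/-- `λ` is a left action of `(G, ∘)`. -/
lemma lam_lam (h : IsBrace mul e inv circ ce cinv) (a b c : G) :
    lam a (lam b c) = lam (circ a b) c := by
  apply h.mul_group.left_cancel (a := circ a b)
  -- Both sides become `a ∘ b ∘ c`, on the left through `a ∘ b = a · λ a b`.
  rw [h.mul_lam, ← h.mul_lam a b, h.mul_group.assoc, ← h.lam_mul, h.mul_lam, h.mul_lam, h.mul_lam,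
    h.circ_group.assoc]

lemma lam_circ (h : IsBrace mul e inv circ ce cinv) (a b c : G) :
    lam a (circ b c) = circ (lam a b) (lam (rho a b) c) := by
  rw [← h.mul_lam (lam a b), h.lam_lam, h.lam_circ_rho, ← h.lam_lam, ← h.lam_mul, h.mul_lam]

/-- `ρ` is a right action of `(G, ∘)`. -/
lemma rho_rho (h : IsBrace mul e inv circ ce cinv) (a b c : G) :
    rho (rho a b) c = rho a (circ b c) := by
  apply h.circ_group.left_cancel (a := lam a (circ b c))
  rw [h.lam_circ_rho, h.lam_circ, h.circ_group.assoc, h.lam_circ_rho, ← h.circ_group.assoc,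
    h.lam_circ_rho, h.circ_group.assoc]

lemma rho_circ_one (h : IsBrace mul e inv circ ce cinv) (a : G) : rho a ce = a := by
  apply h.circ_group.left_cancel (a := lam a ce)
  rw [h.lam_circ_rho, h.one_eq, h.lam_one, ← h.one_eq, h.circ_group.one_op, h.circ_group.op_one]

lemma lam_lam_rho (h : IsBrace mul e inv circ ce cinv) (a b : G) :
    lam (lam a b) (rho a b) = a := by
  apply h.mul_group.left_cancel (a := lam a b)
  rw [h.mul_lam, h.lam_circ_rho, h.mul_comm, h.mul_lam]

lemma rho_lam_rho (h : IsBrace mul e inv circ ce cinv) (a b : G) :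
    rho (lam a b) (rho a b) = b := by
  apply h.circ_group.left_cancel (a := a)
  have key := h.lam_circ_rho (lam a b) (rho a b)
  rwa [h.lam_lam_rho, h.lam_circ_rho] at key

/-- The middle component of the braid relation. -/
lemma braid_middle (h : IsBrace mul e inv circ ce cinv) (a b c : G) :
    rho (lam a b) (lam (rho a b) c) = lam (rho a (lam b c)) (rho b c) := by
  apply h.circ_group.left_cancel (a := lam (lam a b) (lam (rho a b) c))
  apply h.circ_group.right_cancel (a := rho (rho a b) c)
  -- Both triples have `∘`-product `a ∘ b ∘ c`.
  calc _ = circ (circ a b) c := by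
        rw [h.lam_circ_rho, h.circ_group.assoc, h.lam_circ_rho, ← h.circ_group.assoc,
          h.lam_circ_rho]
    _ = _ := by
        rw [h.circ_group.assoc a b c, h.lam_lam, h.lam_circ_rho, ← h.lam_lam, h.rho_rho,
          ← h.lam_circ_rho b c, ← h.rho_rho, h.circ_group.assoc, h.lam_circ_rho (rho a (lam b c)),
          ← h.circ_group.assoc (lam a (lam b c)), h.lam_circ_rho a, h.circ_group.assoc]

end IsBrace

/-- For a brace `(G, ·, ∘)`, the map
`R_G(a, b) = (a⁻¹ · (a ∘ b), (a⁻¹ · (a ∘ b))‾ ∘ a ∘ b)` is a non-degenerate involutive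
set-theoretical solution of the Yang-Baxter equation on `G`. -/
theorem statement9 {G : Type*} (mul : G → G → G) (e : G) (inv : G → G)
    (circ : G → G → G) (ce : G) (cinv : G → G)
    (hG : IsBrace mul e inv circ ce cinv)
    (R : G × G → G × G)
    (hR : ∀ a b, R (a, b) = (mul (inv a) (circ a b),
      circ (circ (cinv (mul (inv a) (circ a b))) a) b)) :
    IsYBSolution R ∧ IsNonDegenerate R ∧ IsInvolutiveSol R := by
  have h := hG
  replace hR : ∀ a b, R (a, b) = (braceLam mul inv circ a b, braceRho mul inv circ cinv a b) := hR
  have hinv : IsInvolutiveSol R := by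
    rintro ⟨a, b⟩
    rw [hR, hR, h.lam_lam_rho, h.rho_lam_rho]
  refine ⟨⟨Function.Involutive.bijective hinv, ?_⟩, ⟨fun a => ?_, fun b => ?_⟩, hinv⟩
  · funext ⟨a, b, c⟩
    simp only [Function.comp, YB12, YB23, hR, Prod.mk.injEq]
    refine ⟨?_, h.braid_middle a b c, ?_⟩
    · rw [h.lam_lam, h.lam_circ_rho, h.lam_lam]
    · rw [h.rho_rho, h.rho_rho, h.lam_circ_rho]
  · simp only [hR]
    refine Function.bijective_iff_has_inverse.2 ⟨braceLam mul inv circ (cinv a), ?_, ?_⟩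
    · intro b
      rw [h.lam_lam, h.circ_group.inv_op, h.lam_circ_one]
    · intro b
      simp only [h.lam_lam, h.circ_group.op_inv, h.lam_circ_one]
  · simp only [hR]
    refine Function.bijective_iff_has_inverse.2
      ⟨fun a => braceRho mul inv circ cinv a (cinv b), ?_, ?_⟩
    · intro a
      simp only [h.rho_rho, h.circ_group.op_inv, h.rho_circ_one]
    · intro a
      simp only [h.rho_rho, h.circ_group.inv_op, h.rho_circ_one]
end

section
/- Let (G,·_G,∘_G) and (H,·_H,∘_H) be braces, Φ : G → Aut(H) a semi-trivial action, and B : H → G a map. Equip the set H × G with the operations (h,a) • (k,b) = (h ·_H k, B(h ·_H k)⁻¹ ·_G B(h) ·_G a ·_G B(k) ·_G b) and (h,a) ⋆ (k,b) = (h ∘_H Φ(B(h) ·_G a)(k), B(h ∘_H Φ(B(h) ·_G a)(k))⁻¹ ·_G ((B(h) ·_G a) ∘_G (B(k) ·_G b))), obtained by transporting the semi-direct product brace structure of H ⋊_Φ G along the bijection ξ_B(h,a) = (h, B(h) ·_G a); this (H × G, •, ⋆) is a brace. Then (H × G, •, ⋆) admits a factorization through the left ideals H × {e_G} and {e_H}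 × G if and only if B is an enhanced relative Rota-Baxter operator on G with respect to Φ. -/
/-- The two units of a brace coincide: `a ∘ e = (a ∘ e) · a⁻¹ · (a ∘ e)` forces `a ∘ e = a`. -/
theorem IsBrace.circ_unit_eq {G : Type*} {mul : G → G → G} {e : G} {inv : G → G}
    {circ : G → G → G} {ce : G} {cinv : G → G}
    (h : IsBrace mul e inv circ ce cinv) : ce = e := by
  have h1 := h.compat ce e e
  rw [h.mul_group.op_one, h.circ_group.one_op, h.mul_group.one_op, h.mul_group.op_one] at h1
  have h2 := h.mul_group.op_inv ce
  rwa [← h1, h.mul_group.op_one] at h2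

/-- The commutative group underlying a brace, as a bundled instance. -/
abbrev IsBrace.commGroup {G : Type*} {mul : G → G → G} {e : G} {inv : G → G}
    {circ : G → G → G} {ce : G} {cinv : G → G}
    (h : IsBrace mul e inv circ ce cinv) : CommGroup G where
  mul := mul
  one := e
  inv := inv
  mul_assoc := h.mul_group.assoc
  one_mul := h.mul_group.one_op
  mul_one := h.mul_group.op_one
  inv_mul_cancel := h.mul_group.inv_op
  mul_comm := h.mul_comm

/-- The semi-direct product `H ⋊_Φ G` is a brace. -/
theorem isBrace_semidirect {G H : Type*} [CommGroup G] [CommGroup H]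
    {circG : G → G → G} {cinvG : G → G} {circH : H → H → H} {cinvH : H → H}
    (hG : IsBrace (· * ·) (1 : G) (·⁻¹) circG 1 cinvG)
    (hH : IsBrace (· * ·) (1 : H) (·⁻¹) circH 1 cinvH)
    {Φ : G → H → H} (hΦ : IsSemiTrivialAction circG (· * ·) circH Φ) :
    IsBrace (· * ·) (1 : H × G) (·⁻¹)
      (fun p q => (circH p.1 (Φ p.2 q.1), circG p.2 q.2)) 1
      (fun p => (Φ (cinvG p.2) (cinvH p.1), cinvG p.2)) := by
  obtain ⟨hA, hc⟩ := hΦ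
  have hmul (a : G) (h k : H) : Φ a (h * k) = Φ a h * Φ a k := (hA a).2.1 h k
  have hcirc (a : G) (h k : H) : Φ a (circH h k) = circH (Φ a h) (Φ a k) := (hA a).2.2 h k
  have hunit (a : G) : Φ a 1 = 1 := by simpa using hmul a 1 1
  have hone (h : H) : Φ 1 h = h := by
    apply (hA 1).1.1
    rw [← hc, hG.circ_group.one_op]
  refine ⟨⟨mul_assoc, one_mul, mul_one, inv_mul_cancel, mul_inv_cancel⟩, mul_comm,
    ⟨?_, ?_, ?_, ?_, ?_⟩, ?_⟩
  · intro p q r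
    simp only [hc, hcirc, hG.circ_group.assoc, hH.circ_group.assoc]
  · intro p
    ext <;> simp [hone, hG.circ_group.one_op, hH.circ_group.one_op]
  · intro p
    ext <;> simp [hunit, hG.circ_group.op_one, hH.circ_group.op_one]
  · intro p
    ext
    · simp [← hcirc, hH.circ_group.inv_op, hunit]
    · simp [hG.circ_group.inv_op]
  · intro p
    ext
    · simp [← hc, hG.circ_group.op_inv, hone, hH.circ_group.op_inv]
    · simp [hG.circ_group.op_inv]
  · intro p q r
    ext
    · simpa [hmul] using hH.compat p.1 (Φ p.2 q.1) (Φ p.2 r.1)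
    · simpa using hG.compat p.2 q.2 r.2

/-- A brace structure on `Q` pulls back along a bijection `P ≃ Q`. -/
theorem IsBrace.transport {P Q : Type*} {mul : Q → Q → Q} {e : Q} {inv : Q → Q}
    {circ : Q → Q → Q} {ce : Q} {cinv : Q → Q}
    (h : IsBrace mul e inv circ ce cinv) (ξ : P ≃ Q) :
    IsBrace (fun p q => ξ.symm (mul (ξ p) (ξ q))) (ξ.symm e) (fun p => ξ.symm (inv (ξ p)))
      (fun p q => ξ.symm (circ (ξ p) (ξ q))) (ξ.symm ce) (fun p => ξ.symm (cinv (ξ p))) := by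
  obtain ⟨⟨a1, a2, a3, a4, a5⟩, hcomm, ⟨b1, b2, b3, b4, b5⟩, hcompat⟩ := h
  refine ⟨⟨?_, ?_, ?_, ?_, ?_⟩, ?_, ⟨?_, ?_, ?_, ?_, ?_⟩, ?_⟩ <;> intros <;> simp [*]

/-- The bijection `ξ_B(h, a) = (h, B(h) · a)` of `H × G`. -/
def xiEquiv {G H : Type*} [CommGroup G] (B : H → G) : H × G ≃ H × G where
  toFun p := (p.1, B p.1 * p.2)
  invFun p := (p.1, (B p.1)⁻¹ * p.2)
  left_inv p := by simp
  right_inv p := by simp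

/-- The equivalence with the multiplicative groups of both braces taken as instances. -/
theorem factorization_iff {G H : Type*} [CommGroup G] [CommGroup H]
    {circG : G → G → G} {cinvG : G → G} {circH : H → H → H} {cinvH : H → H}
    (hG : IsBrace (· * ·) (1 : G) (·⁻¹) circG 1 cinvG)
    (hH : IsBrace (· * ·) (1 : H) (·⁻¹) circH 1 cinvH)
    {Φ : G → H → H} (hΦ : IsSemiTrivialAction circG (· * ·) circH Φ) (B : H → G)
    (bullet star : H × G → H × G → H × G)
    (hbullet : ∀ p q : H × G, bullet p q = (p.1 * q.1,
      (B (p.1 * q.1))⁻¹ * B p.1 * p.2 * B q.1 * q.2))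
    (hstar : ∀ p q : H × G, star p q = (circH p.1 (Φ (B p.1 * p.2) q.1),
      (B (circH p.1 (Φ (B p.1 * p.2) q.1)))⁻¹ * circG (B p.1 * p.2) (B q.1 * q.2))) :
    (∃ invP cinvP : H × G → H × G,
      IsBrace bullet (1, (B 1)⁻¹) invP star (1, (B 1)⁻¹) cinvP) ∧
    ((IsLeftIdealOf bullet (1, (B 1)⁻¹) star {p : H × G | p.2 = 1} ∧
      IsLeftIdealOf bullet (1, (B 1)⁻¹) star {p : H × G | p.1 = 1} ∧
      ∀ p : H × G, ∃! xy : (H × G) × (H × G),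
        xy.1 ∈ {p : H × G | p.2 = 1} ∧ xy.2 ∈ {p : H × G | p.1 = 1} ∧
        p = bullet xy.1 xy.2) ↔
      IsEnhancedRelRBO (· * ·) circG (· * ·) circH Φ B) := by
  constructor
  · have key := (isBrace_semidirect hG hH hΦ).transport (xiEquiv B)
    have e1 : bullet = fun p q => (xiEquiv B).symm (xiEquiv B p * xiEquiv B q) := by
      funext p q
      simp [hbullet, xiEquiv, mul_assoc]
    have e2 : star = fun p q => (xiEquiv B).symm
        (circH (xiEquiv B p).1 (Φ (xiEquiv B p).2 (xiEquiv B q).1),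
          circG (xiEquiv B p).2 (xiEquiv B q).2) := by
      funext p q
      simp [hstar, xiEquiv]
    have e3 : ((1, (B 1)⁻¹) : H × G) = (xiEquiv B).symm 1 := by
      simp [xiEquiv]
    rw [e1, e2, e3]
    exact ⟨_, _, key⟩
  · constructor
    · rintro ⟨⟨-, hcl, -, hid⟩, -, -⟩
      have hB (h k : H) : B h * B k = B (h * k) := by
        have := hcl (h, 1) rfl (k, 1) rfl
        simp only [hbullet, Set.mem_ofPred_eq, mul_one, mul_assoc] at this
        exact (inv_mul_eq_one.mp this).symm
      refine ⟨hB, fun a h k => ?_⟩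
      set m := circH h (Φ (B h * a) k) with hm
      -- `r = (h, a)⁻¹ • ((h, a) ⋆ (k, 1))` lies in `H × {1}`.
      have := hid (h, a) (k, 1) rfl
        (h⁻¹ * m, (B (h⁻¹ * m))⁻¹ * (B h * a)⁻¹ * circG (B h * a) (B k)) (by
          simp only [hbullet, hstar, mul_one, ← hm, mul_inv_cancel_left]
          congr 1
          simp only [mul_assoc, mul_inv_cancel_left, mul_inv_rev])
      have hm' : B (h⁻¹ * m) * B h = B m := by rw [hB]; congr 1; simp [mul_comm h⁻¹]
      change (B (h⁻¹ * m))⁻¹ * (B h * a)⁻¹ * circG (B h * a) (B k) = 1 at this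
      rw [← mul_inv_rev, inv_mul_eq_one] at this
      change circG (B h * a) (B k) = B m * a
      rw [← this, ← hm', mul_comm, mul_assoc]
    · rintro ⟨hB, hR⟩
      have hB (h k : H) : B (h * k) = B h * B k := (hB h k).symm
      have hR (a : G) (h k : H) :
        circG (B h * a) (B k) = B (circH h (Φ (B h * a) k)) * a := hR a h k
      have hB1 : B 1 = 1 := by simpa using hB 1 1
      have hΦ1 (a : G) : Φ a 1 = 1 := by simpa using (hΦ.1 a).2.1 1 1
      -- When `B` is multiplicative, `•` is the componentwise product.
      have hb (p q : H × G) : bullet p q = p * q := by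
        rw [hbullet, hB]
        ext
        · rfl
        · simp only [Prod.snd_mul, mul_inv_rev]
          calc _ = ((B q.1)⁻¹ * B q.1) * ((B p.1)⁻¹ * B p.1) * (p.2 * q.2) := by
                ac_rfl
            _ = _ := by simp
      have hu : ((1, (B 1)⁻¹) : H × G) = 1 := by simp [hB1]
      rw [hu]
      refine ⟨⟨rfl, ?_, ?_, ?_⟩, ⟨rfl, ?_, ?_, ?_⟩, ?_⟩
      · intro p hp q hq
        have hp : p.2 = 1 := hp
        have hq : q.2 = 1 := hq
        simp [hb, hp, hq]
      · intro p hp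
        have hp : p.2 = 1 := hp
        exact ⟨p⁻¹, by simp [hp], by simp [hb], by simp [hb]⟩
      · intro p x hx r hr
        have hx : x.2 = 1 := hx
        rw [hb, hstar, hx, mul_one, hR, inv_mul_cancel_left] at hr
        simpa using congrArg Prod.snd hr
      · intro p hp q hq
        have hp : p.1 = 1 := hp
        have hq : q.1 = 1 := hq
        simp [hb, hp, hq]
      · intro p hp
        have hp : p.1 = 1 := hp
        exact ⟨p⁻¹, by simp [hp], by simp [hb], by simp [hb]⟩
      · intro p x hx r hr
        have hx : x.1 = 1 := hx
        rw [hb, hstar, hx, hΦ1, hH.circ_group.op_one] at hr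
        simpa using congrArg Prod.fst hr
      · rintro ⟨h, a⟩
        refine ⟨((h, 1), (1, a)), ⟨rfl, rfl, by simp [hb]⟩, ?_⟩
        rintro ⟨⟨x1, x2⟩, ⟨y1, y2⟩⟩ ⟨hx, hy, hxy⟩
        obtain rfl : x2 = 1 := hx
        obtain rfl : y1 = 1 := hy
        rw [hb] at hxy
        simpa [eq_comm] using hxy

/-- The brace `(H × G, •, ⋆)` obtained by transporting the semi-direct
product structure along `ξ_B(h, a) = (h, B(h) ·_G a)` admits a factorization through the
left ideals `H × {e_G}` and `{e_H} × G` if and only if `B` is an enhanced relative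
Rota-Baxter operator. -/
theorem statement12 {G H : Type*}
    (mulG : G → G → G) (eG : G) (invG : G → G)
    (circG : G → G → G) (ceG : G) (cinvG : G → G)
    (mulH : H → H → H) (eH : H) (invH : H → H)
    (circH : H → H → H) (ceH : H) (cinvH : H → H)
    (hG : IsBrace mulG eG invG circG ceG cinvG)
    (hH : IsBrace mulH eH invH circH ceH cinvH)
    (Φ : G → H → H) (hΦ : IsSemiTrivialAction circG mulH circH Φ)
    (B : H → G)
    (bullet star : H × G → H × G → H × G)
    (hbullet : ∀ p q : H × G, bullet p q = (mulH p.1 q.1,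
      mulG (mulG (mulG (mulG (invG (B (mulH p.1 q.1))) (B p.1)) p.2) (B q.1)) q.2))
    (hstar : ∀ p q : H × G, star p q = (circH p.1 (Φ (mulG (B p.1) p.2) q.1),
      mulG (invG (B (circH p.1 (Φ (mulG (B p.1) p.2) q.1))))
        (circG (mulG (B p.1) p.2) (mulG (B q.1) q.2)))) :
    (∃ invP cinvP : H × G → H × G,
      IsBrace bullet (eH, invG (B eH)) invP star (eH, invG (B eH)) cinvP) ∧
    ((IsLeftIdealOf bullet (eH, invG (B eH)) star {p : H × G | p.2 = eG} ∧
      IsLeftIdealOf bullet (eH, invG (B eH)) star {p : H × G | p.1 = eH} ∧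
      ∀ p : H × G, ∃! xy : (H × G) × (H × G),
        xy.1 ∈ {p : H × G | p.2 = eG} ∧ xy.2 ∈ {p : H × G | p.1 = eH} ∧
        p = bullet xy.1 xy.2) ↔
      IsEnhancedRelRBO mulG circG mulH circH Φ B) := by
  obtain rfl := hG.circ_unit_eq
  obtain rfl := hH.circ_unit_eq
  let _ : CommGroup G := hG.commGroup
  let _ : CommGroup H := hH.commGroup
  exact factorization_iff hG hH hΦ B bullet star hbullet hstar
end

section
/- Let B : H → G be an enhanced relative Rota-Baxter operator on a brace (G,·_G,∘_G) with respect to a semi-trivial action Φ : G → Aut(H). Define a ⇀ h = h, a ↽ h = a, a ⇁ h = Φ(a)(h), a ↼ h = a for a ∈ G, h ∈ H, and set σ(a,h) = (a ⇀ h, a ↽ h), θ(a,h) = (a ⇁ h, a ↼ h). Then (G,H,σ,θ) is a matched pair of braces: (G,H,σ) is a matched pair of the groups (G,·_G) and (H,·_H), (G,H,θ) is a matched pair of the groups (G,∘_G) and (H,∘_H), and the double operations (h,a) ·⋈ (k,b) = (h ·_H (a ⇀ k), (a ↽ k) ·_G b) and (h,a) ∘⋈ (k,b) = (h ∘_H (a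 ⇁ k), (a ↼ k) ∘_G b) make H × G into a brace with unit (e_H, e_G). -/
/-- An enhanced relative Rota-Baxter operator gives rise to a matched
pair of braces: `(G, H, σ)` with `a ⇀ h = h`, `a ↽ h = a` is a matched pair of the
`·`-groups, `(G, H, θ)` with `a ⇁ h = Φ(a)(h)`, `a ↼ h = a` is a matched pair of the
`∘`-groups, and the double operations make `H × G` a brace with unit `(e_H, e_G)`. -/
theorem statement13 {G H : Type*}
    (mulG : G → G → G) (eG : G) (invG : G → G)
    (circG : G → G → G) (ceG : G) (cinvG : G → G)
    (mulH : H → H → H) (eH : H) (invH : H → H)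
    (circH : H → H → H) (ceH : H) (cinvH : H → H)
    (hG : IsBrace mulG eG invG circG ceG cinvG)
    (hH : IsBrace mulH eH invH circH ceH cinvH)
    (Φ : G → H → H) (hΦ : IsSemiTrivialAction circG mulH circH Φ)
    (B : H → G) (hB : IsEnhancedRelRBO mulG circG mulH circH Φ B) :
    IsMatchedPairOfGroups mulG eG mulH eH (fun _ h => h) (fun a _ => a) ∧
    IsMatchedPairOfGroups circG ceG circH ceH (fun a h => Φ a h) (fun a _ => a) ∧
    ∃ invP cinvP : H × G → H × G,
      IsBrace (fun p q => (mulH p.1 q.1, mulG p.2 q.2)) (eH, eG) invP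
        (fun p q => (circH p.1 (Φ p.2 q.1), circG p.2 q.2)) (eH, eG) cinvP := by
  obtain ⟨haut, hact⟩ := hΦ
  have hceG := hG.circ_unit_eq
  have hceH := hH.circ_unit_eq
  subst hceG hceH
  -- `Φ(e)` is an injective idempotent, hence the identity.
  have hΦone : ∀ h, Φ ceG h = h := fun h => by
    apply (haut ceG).1.1
    rw [← hact, hG.circ_group.one_op]
  have hΦmul : ∀ a h k, Φ a (mulH h k) = mulH (Φ a h) (Φ a k) := fun a => (haut a).2.1
  have hΦcirc : ∀ a h k, Φ a (circH h k) = circH (Φ a h) (Φ a k) := fun a => (haut a).2.2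
  -- `Φ(a)(e) = e` by cancelling in `Φ(a)(e) · Φ(a)(e) = Φ(a)(e)`.
  have hΦunit : ∀ a, Φ a ceH = ceH := fun a => by
    have h1 := hΦmul a ceH ceH
    rw [hH.mul_group.one_op] at h1
    have h2 := congrArg (mulH (invH (Φ a ceH))) h1
    rw [← hH.mul_group.assoc, hH.mul_group.inv_op, hH.mul_group.one_op] at h2
    exact h2.symm
  refine ⟨⟨fun _ => rfl, fun _ _ _ => rfl, fun _ _ _ => rfl, fun _ => rfl, fun _ _ _ => rfl,
    fun _ _ _ => rfl⟩, ⟨hΦone, fun a b h => (hact a b h).symm, fun _ _ _ => rfl, fun _ => rfl,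
    fun _ _ _ => rfl, hΦcirc⟩,
    fun p => (invH p.1, invG p.2), fun p => (Φ (cinvG p.2) (cinvH p.1), cinvG p.2), ?_⟩
  refine ⟨⟨?_, ?_, ?_, ?_, ?_⟩, ?_, ⟨?_, ?_, ?_, ?_, ?_⟩, ?_⟩
  · rintro ⟨h, a⟩ ⟨k, b⟩ ⟨l, c⟩
    simp only [hH.mul_group.assoc, hG.mul_group.assoc]
  · rintro ⟨h, a⟩
    simp only [hH.mul_group.one_op, hG.mul_group.one_op]
  · rintro ⟨h, a⟩
    simp only [hH.mul_group.op_one, hG.mul_group.op_one]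
  · rintro ⟨h, a⟩
    simp only [hH.mul_group.inv_op, hG.mul_group.inv_op]
  · rintro ⟨h, a⟩
    simp only [hH.mul_group.op_inv, hG.mul_group.op_inv]
  · rintro ⟨h, a⟩ ⟨k, b⟩
    exact Prod.ext (hH.mul_comm h k) (hG.mul_comm a b)
  · rintro ⟨h, a⟩ ⟨k, b⟩ ⟨l, c⟩
    simp only [hH.circ_group.assoc, hG.circ_group.assoc, hΦcirc, hact]
  · rintro ⟨h, a⟩
    simp only [hH.circ_group.one_op, hG.circ_group.one_op, hΦone]
  · rintro ⟨h, a⟩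
    simp only [hH.circ_group.op_one, hG.circ_group.op_one, hΦunit]
  · rintro ⟨h, a⟩
    simp only [← hΦcirc, hH.circ_group.inv_op, hG.circ_group.inv_op, hΦunit]
  · rintro ⟨h, a⟩
    simp only [← hact, hG.circ_group.op_inv, hΦone, hH.circ_group.op_inv]
  · rintro ⟨h, a⟩ ⟨k, b⟩ ⟨l, c⟩
    simp only [hΦmul, hH.compat, hG.compat]
end

section
/- Let B : G → G be an enhanced Rota-Baxter operator on a two-sided brace (G,·,∘). Then b ∘ B(b) = B(b) · b for all b ∈ G. -/
/-- For an enhanced Rota-Baxter operator `B` on a two-sided brace,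
`b ∘ B(b) = B(b) · b` for all `b`. -/
theorem statement15 {G : Type*} (mul : G → G → G) (e : G) (inv : G → G)
    (circ : G → G → G) (ce : G) (cinv : G → G)
    (hG : IsTwoSidedBrace mul e inv circ ce cinv)
    (B : G → G) (hB : IsEnhancedRBTwoSided mul circ cinv B) :
    ∀ b, circ b (B b) = mul (B b) b := by
  -- With `a = e` the enhanced identity reads `x ∘ B(b) = B(x ∘ b ∘ x̄) · x`, because `B(e) = e`
  -- and the two identities coincide; at `x = b` the conjugate is `b` itself.
  obtain ⟨⟨hm, -, hc, hcompat⟩, -⟩ := hG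
  obtain ⟨⟨hmul, -⟩, henh⟩ := hB
  have hce : ce = e := by
    have h := hcompat ce e e
    rw [hc.one_op, hc.one_op, hm.one_op, hm.one_op, hm.op_one] at h
    rw [← hm.op_inv ce, ← h, hm.op_one]
  have hBe : B e = e := by
    have h := hmul e e
    rw [hm.one_op] at h
    calc B e = mul (inv (B e)) (mul (B e) (B e)) := by
          rw [← hm.assoc, hm.inv_op, hm.one_op]
      _ = e := by rw [h, hm.inv_op]
  intro b
  have had : adC circ cinv b b = b := by
    rw [adC, hc.assoc, hc.op_inv, hc.op_one]
  have h := henh e b b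
  rwa [hBe, hm.one_op, had, ← hce, hc.one_op] at h
end

section
/- Let (G,B) be an enhanced Rota-Baxter two-sided brace, with B₊(a) = a ∘ B(a), G₊ = Im B₊, G₋ = Im B, K₊ = Ker B, K₋ = Ker B₊. Then the map Θ : G₋/K₋ → G₊/K₊ defined by Θ([B(a)]) = [B₊(a)] for a ∈ G is well defined (independent of the choice of a with given class [B(a)]) and is an isomorphism of braces between the quotient braces G₋/K₋ and G₊/K₊. -/
theorem IsGroup.map_one_of_map_op {G : Type*} {mul : G → G → G} {e : G} {inv : G → G}
    (h : IsGroup mul e inv) {f : G → G} (hf : ∀ a b, mul (f a) (f b) = f (mul a b)) :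
    f e = e := by
  have h1 := congrArg (mul (inv (f e))) (hf e e)
  rwa [h.one_op, ← h.assoc, h.inv_op, h.one_op] at h1

theorem IsGroup.inv_eq_of_op_eq {G : Type*} {mul : G → G → G} {e : G} {inv : G → G}
    (h : IsGroup mul e inv) {a b : G} (hab : mul a b = e) : inv a = b := by
  rw [← h.op_one (inv a), ← hab, ← h.assoc, h.inv_op, h.one_op]

/-- On a left brace, every enhanced Rota-Baxter operator takes values whose right `∘`-action
agrees with the `·`-action. -/
theorem circ_B_eq_mul {G : Type*} {mul : G → G → G} {e : G} {inv : G → G}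
    {circ : G → G → G} {ce : G} {cinv : G → G}
    (h : IsBrace mul e inv circ ce cinv)
    {B : G → G} (hB : IsEnhancedRBTwoSided mul circ cinv B) (x b : G) :
    circ x (B b) = mul x (B b) := by
  obtain rfl := h.circ_unit_eq
  have hM := h.mul_group
  have hC := h.circ_group
  have hBe := hM.map_one_of_map_op hB.1.1
  have hcinv : cinv ce = ce := hC.inv_eq_of_op_eq (hC.op_one ce)
  -- the enhanced identity at `x = (B a)⁻¹`
  have hhom : ∀ a b, B (circ a b) = mul (B a) (B b) := by
    intro a b
    have h1 := hB.2 a b (inv (B a))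
    simp only [hM.op_inv, adC, hC.one_op, hcinv, hC.op_one] at h1
    rw [h1, h.mul_comm (B a), hM.assoc, hM.inv_op, hM.op_one]
  have had : B (adC circ cinv x b) = B b := by
    have h1 : mul (B x) (B (cinv x)) = ce := by rw [← hhom, hC.op_inv, hBe]
    rw [adC, hhom, hhom, h.mul_comm (B x), hM.assoc, h1, hM.op_one]
  -- the enhanced identity at `a = e`
  have h1 := hB.2 ce b x
  rw [hBe, hM.one_op, hC.one_op, had] at h1
  rw [h1, h.mul_comm]

/-- The Cayley transform `Θ : G₋/K₋ → G₊/K₊`, `Θ([B(a)]) = [B₊(a)]`,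
is well defined and an isomorphism of braces between the quotient braces, expressed at
the level of coset representatives: classes `[x] = [y]` correspond to `x · y⁻¹` lying in
the relevant kernel. -/
theorem statement18 {G : Type*} (mul : G → G → G) (e : G) (inv : G → G)
    (circ : G → G → G) (ce : G) (cinv : G → G)
    (hG : IsTwoSidedBrace mul e inv circ ce cinv)
    (B : G → G) (hB : IsEnhancedRBTwoSided mul circ cinv B)
    (Bplus : G → G) (hBplus : ∀ a, Bplus a = circ a (B a)) :
    -- Θ is well defined
    (∀ a b : G, mul (B a) (inv (B b)) ∈ {x : G | Bplus x = e} →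
      mul (Bplus a) (inv (Bplus b)) ∈ {x : G | B x = e}) ∧
    -- Θ is injective
    (∀ a b : G, mul (Bplus a) (inv (Bplus b)) ∈ {x : G | B x = e} →
      mul (B a) (inv (B b)) ∈ {x : G | Bplus x = e}) ∧
    -- Θ is surjective
    (∀ y ∈ Set.range Bplus, ∃ a : G, mul y (inv (Bplus a)) ∈ {x : G | B x = e}) ∧
    -- Θ preserves the abelian-group operation of the quotient braces
    (∀ a b : G, mul (Bplus (mul a b)) (inv (mul (Bplus a) (Bplus b)))
        ∈ {x : G | B x = e}) ∧
    -- Θ preserves the circle operation of the quotient braces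
    (∀ a b : G, mul (Bplus (circ a (adC circ cinv (B a) b)))
        (inv (circ (Bplus a) (Bplus b))) ∈ {x : G | B x = e}) := by
  have h := hG.1
  have hM := h.mul_group
  have hC := h.circ_group
  have hBe := hM.map_one_of_map_op hB.1.1
  have hBp : ∀ a, Bplus a = mul a (B a) := fun a => by rw [hBplus, circ_B_eq_mul h hB]
  have hadd : ∀ a b, mul (Bplus a) (Bplus b) = Bplus (mul a b) := by
    intro a b
    rw [hBp, hBp, hBp, ← hB.1.1, hM.assoc, hM.assoc, ← hM.assoc (B a), h.mul_comm (B a) b,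
      hM.assoc b]
  have hcomm : ∀ c, B (Bplus c) = Bplus (B c) := by
    intro c
    rw [hBp, hBp, hB.1.1]
  have hdiff : ∀ f : G → G, (∀ a b, mul (f a) (f b) = f (mul a b)) →
      ∀ a b, mul (f a) (inv (f b)) = f (mul a (inv b)) := by
    intro f hf a b
    rw [← hf, hM.inv_eq_of_op_eq (b := f (inv b))]
    rw [hf, hM.op_inv, hM.map_one_of_map_op hf]
  have hself : ∀ y, B (mul y (inv y)) = e := fun y => by rw [hM.op_inv, hBe]
  simp only [Set.mem_setOf_eq, hdiff B hB.1.1, hdiff Bplus hadd, hcomm]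
  refine ⟨fun _ _ => id, fun _ _ => id, ?_, ?_, ?_⟩
  · rintro _ ⟨a, rfl⟩
    exact ⟨a, hself _⟩
  · intro a b
    rw [hadd]
    exact hself _
  · intro a b
    have hstar : Bplus (circ a (adC circ cinv (B a) b)) = circ (Bplus a) (Bplus b) := by
      rw [hBplus, ← hB.1.2, hBplus, hBplus]
      simp only [adC, hC.assoc]
      rw [← hC.assoc (cinv (B a)), hC.inv_op, hC.one_op]
    rw [hstar]
    exact hself _
end
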